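/- arXiv:1710.05161 — 4 statements merged into one kernel-verified Lean document; each statement's English description precedes it below -/
import Mathlib

section
/- Let (C, Δ_C) and (D, Δ_D) be coalgebras over a field K forming a double coalgebra: C carries a left D-comodule structure ρ : C → D⊗C, written ρ(c) = c₍₋₁₎ ⊗ c₍₀₎, and D carries a right C-comodule structure λ : D → D⊗C, written λ(d) = d₍₀₎ ⊗ d₍₁₎, satisfying for all c ∈ C, d ∈ D: c₍₋₁₎ ⊗ c₍₀₎₁ ⊗ c₍₀₎₂ = c₁₍₋₁₎ ⊗ c₁₍₀₎ ⊗ c₂ + (c₍₋₁₎)₍₀₎ ⊗ (c₍₋₁₎)₍₁₎ ⊗ c₍₀₎ and d₍₀₎₁ ⊗ d₍₀₎₂ ⊗ d₍₁₎ = d₁ ⊗ d₂₍₀₎ ⊗ d₂₍₁₎ + d₍₀₎ ⊗ (d₍₁₎)₍₋₁₎ ⊗ (d₍₁₎)₍₀₎. Then the linear map Δ : C⊗D → (C⊗D)⊗(C⊗D) defined by Δ(c ⊗ d) = c₁ ⊗ (c₂)₍₋₁₎ ⊗ (c₂)₍₀₎ ⊗ d + c ⊗ (d₁)₍₀₎ ⊗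 (d₁)₍₁₎ ⊗ d₂ is coassociative, so (C⊗D, Δ) is a coassociative coalgebra. -/
open TensorProduct

noncomputable section

variable {K : Type*} [Field K] {C : Type*} [AddCommGroup C] [Module K C]

/-- Coassociativity of a comultiplication (no counit assumed). -/
def Coassoc (Δ : C →ₗ[K] C ⊗[K] C) : Prop :=
  ∀ c : C, (TensorProduct.assoc K C C C) (TensorProduct.map Δ LinearMap.id (Δ c)) =
    TensorProduct.map LinearMap.id Δ (Δ c)

/-- Rota-Baxter cosystem conditions. -/
def IsRBCosystem (Δ : C →ₗ[K] C ⊗[K] C) (Q T : C →ₗ[K] C) : Prop :=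
  (∀ c : C, TensorProduct.map Q Q (Δ c) =
      TensorProduct.map Q LinearMap.id (Δ (Q c)) +
      TensorProduct.map LinearMap.id T (Δ (Q c))) ∧
  (∀ c : C, TensorProduct.map T T (Δ c) =
      TensorProduct.map Q LinearMap.id (Δ (T c)) +
      TensorProduct.map LinearMap.id T (Δ (T c)))

/-- Non-degeneracy of a coalgebra. -/
def Nondegenerate (Δ : C →ₗ[K] C ⊗[K] C) : Prop :=
  ∀ f : C →ₗ[K] C,
    ((∀ c : C, TensorProduct.map LinearMap.id f (Δ c) = 0) ∨
     (∀ c : C, TensorProduct.map f LinearMap.id (Δ c) = 0)) → f = 0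

/-- `pairApply f g (x ⊗ y) = f x * g y`. -/
def pairApply (f g : C →ₗ[K] K) : C ⊗[K] C →ₗ[K] K :=
  TensorProduct.lift ((LinearMap.mul K K).compl₁₂ f g)

/-- Coassociative Yang–Baxter pair. -/
def IsCYBP (Δ : C →ₗ[K] C ⊗[K] C) (σ τ : C →ₗ[K] C →ₗ[K] K) : Prop :=
  (∀ c d e : C, pairApply (σ.flip e) (σ.flip d) (Δ c)
      - pairApply (σ c) (σ.flip e) (Δ d) + pairApply (τ d) (σ c) (Δ e) = 0) ∧
  (∀ c d e : C, pairApply (τ.flip e) (σ.flip d) (Δ c)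
      - pairApply (τ c) (τ.flip e) (Δ d) + pairApply (τ d) (τ c) (Δ e) = 0)

/-- Swap of the first two tensor factors of `C ⊗ (C ⊗ C)`. -/
def swapFirstTwo : C ⊗[K] (C ⊗[K] C) →ₗ[K] C ⊗[K] (C ⊗[K] C) :=
  (TensorProduct.assoc K C C C).toLinearMap ∘ₗ
    LinearMap.rTensor C (TensorProduct.comm K C C).toLinearMap ∘ₗ
    (TensorProduct.assoc K C C C).symm.toLinearMap

/-- `contract13 σ (x ⊗ (y ⊗ z)) = σ x z • y`. -/
def contract13 (σ : C →ₗ[K] C →ₗ[K] K) : C ⊗[K] (C ⊗[K] C) →ₗ[K] C :=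
  (TensorProduct.rid K C).toLinearMap ∘ₗ
    LinearMap.lTensor C (TensorProduct.lift σ) ∘ₗ swapFirstTwo

/-- `muForm Δ σ τ (c ⊗ d) = σ(c₂,d) • c₁ − τ(c,d₁) • d₂`. -/
def muForm (Δ : C →ₗ[K] C ⊗[K] C) (σ τ : C →ₗ[K] C →ₗ[K] K) :
    C ⊗[K] C →ₗ[K] C :=
  ((TensorProduct.rid K C).toLinearMap ∘ₗ
      LinearMap.lTensor C (TensorProduct.lift σ) ∘ₗ
      (TensorProduct.assoc K C C C).toLinearMap ∘ₗ LinearMap.rTensor C Δ)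
  - ((TensorProduct.lid K C).toLinearMap ∘ₗ
      LinearMap.rTensor C (TensorProduct.lift τ) ∘ₗ
      (TensorProduct.assoc K C C C).symm.toLinearMap ∘ₗ LinearMap.lTensor C Δ)

/-- Coderivation condition for a multiplication-like map on a coalgebra. -/
def IsCoderivation (Δ : C →ₗ[K] C ⊗[K] C) (δ : C ⊗[K] C →ₗ[K] C) : Prop :=
  ∀ c d : C, Δ (δ (c ⊗ₜ d)) =
    LinearMap.lTensor C (δ ∘ₗ (TensorProduct.mk K C C).flip d) (Δ c) +
    LinearMap.rTensor C (δ ∘ₗ TensorProduct.mk K C C c) (Δ d)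

/-- Covariant coderivation with respect to `(δ₁, δ₂)`. -/
def IsCovariant (Δ : C →ₗ[K] C ⊗[K] C) (δ₁ δ₂ μ : C ⊗[K] C →ₗ[K] C) : Prop :=
  (∀ c d : C, Δ (μ (c ⊗ₜ d)) =
      LinearMap.rTensor C (μ ∘ₗ TensorProduct.mk K C C c) (Δ d) +
      LinearMap.lTensor C (δ₁ ∘ₗ (TensorProduct.mk K C C).flip d) (Δ c)) ∧
  (∀ c d : C, Δ (μ (c ⊗ₜ d)) =
      LinearMap.lTensor C (μ ∘ₗ (TensorProduct.mk K C C).flip d) (Δ c) +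
      LinearMap.rTensor C (δ₂ ∘ₗ TensorProduct.mk K C C c) (Δ d))

/-- Associativity of a multiplication `μ : C ⊗ C →ₗ C`. -/
def IsAssocMul (μ : C ⊗[K] C →ₗ[K] C) : Prop :=
  ∀ c d e : C, μ (μ (c ⊗ₜ d) ⊗ₜ e) = μ (c ⊗ₜ μ (d ⊗ₜ e))

/-- Counit condition. -/
def IsCounit (Δ : C →ₗ[K] C ⊗[K] C) (ε : C →ₗ[K] K) : Prop :=
  ∀ c : C, (TensorProduct.lid K C) (TensorProduct.map ε LinearMap.id (Δ c)) = c ∧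
    (TensorProduct.rid K C) (TensorProduct.map LinearMap.id ε (Δ c)) = c

/-- Dendriform coalgebra conditions for `(Δr, Δl) = (Δ_≻, Δ_≺)`. -/
def IsDendriformCoalgebra (Δr Δl : C →ₗ[K] C ⊗[K] C) : Prop :=
  (∀ c : C, (TensorProduct.assoc K C C C) (TensorProduct.map Δr LinearMap.id (Δr c)) =
      TensorProduct.map LinearMap.id Δr (Δr c) + TensorProduct.map LinearMap.id Δl (Δr c)) ∧
  (∀ c : C, (TensorProduct.assoc K C C C) (TensorProduct.map Δl LinearMap.id (Δr c)) =
      TensorProduct.map LinearMap.id Δr (Δl c)) ∧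
  (∀ c : C, (TensorProduct.assoc K C C C) (TensorProduct.map Δr LinearMap.id (Δl c)) +
      (TensorProduct.assoc K C C C) (TensorProduct.map Δl LinearMap.id (Δl c)) =
      TensorProduct.map LinearMap.id Δl (Δl c))

/-- The conditions on the bilinear form `u` in Theorem 4.11. -/
def UCond (Δ : C →ₗ[K] C ⊗[K] C) (δ₁ δ₂ : C ⊗[K] C →ₗ[K] C)
    (u : C →ₗ[K] C →ₗ[K] K) : Prop :=
  (∀ c d : C, δ₁ (c ⊗ₜ d) - δ₂ (c ⊗ₜ d) =
      (TensorProduct.rid K C) (LinearMap.lTensor C (u.flip d) (Δ c)) -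
      (TensorProduct.lid K C) (LinearMap.rTensor C (u c) (Δ d))) ∧
  (∀ c d e : C, δ₁ (δ₁ (c ⊗ₜ d) ⊗ₜ e) - δ₁ (c ⊗ₜ δ₁ (d ⊗ₜ e)) =
      (TensorProduct.lid K C)
        (TensorProduct.map (u d) (δ₁ ∘ₗ TensorProduct.mk K C C c) (Δ e))) ∧
  (∀ c d e : C, u (δ₁ (c ⊗ₜ d)) e - u c (δ₁ (d ⊗ₜ e)) =
      pairApply (u d) (u c) (Δ e) - pairApply (u c) (u.flip e) (Δ d))

section aux
variable {D : Type*} [AddCommGroup D] [Module K D]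

def dcP (ΔC : C →ₗ[K] C ⊗[K] C) (ρ : C →ₗ[K] D ⊗[K] C) : C →ₗ[K] C ⊗[K] (D ⊗[K] C) :=
  LinearMap.lTensor C ρ ∘ₗ ΔC

def dcQ (ΔD : D →ₗ[K] D ⊗[K] D) (lam : D →ₗ[K] D ⊗[K] C) : D →ₗ[K] D ⊗[K] (C ⊗[K] D) :=
  (TensorProduct.assoc K D C D).toLinearMap ∘ₗ LinearMap.rTensor D lam ∘ₗ ΔD

/-- Right-normalizing `(a ⊗ (b ⊗ c)) ⊗ e`. -/
def dcSh (R S T U : Type*) [AddCommGroup R] [Module K R] [AddCommGroup S] [Module K S]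
    [AddCommGroup T] [Module K T] [AddCommGroup U] [Module K U] :
    (R ⊗[K] (S ⊗[K] T)) ⊗[K] U →ₗ[K] R ⊗[K] (S ⊗[K] (T ⊗[K] U)) :=
  LinearMap.lTensor R (TensorProduct.assoc K S T U).toLinearMap ∘ₗ
    (TensorProduct.assoc K R (S ⊗[K] T) U).toLinearMap

theorem dcSh_tmul {R S T U : Type*} [AddCommGroup R] [Module K R] [AddCommGroup S] [Module K S]
    [AddCommGroup T] [Module K T] [AddCommGroup U] [Module K U] (r : R) (s : S) (t : T) (u : U) :
    dcSh (K := K) R S T U ((r ⊗ₜ (s ⊗ₜ t)) ⊗ₜ u) = r ⊗ₜ (s ⊗ₜ (t ⊗ₜ u)) := by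
  simp [dcSh]

theorem dc_keyC (ΔC : C →ₗ[K] C ⊗[K] C) (hC : Coassoc ΔC)
    (ΔD : D →ₗ[K] D ⊗[K] D)
    (ρ : C →ₗ[K] D ⊗[K] C)
    (hρ : ∀ c : C, (TensorProduct.assoc K D D C) (LinearMap.rTensor C ΔD (ρ c)) =
      LinearMap.lTensor D ρ (ρ c))
    (lam : D →ₗ[K] D ⊗[K] C)
    (compat1 : ∀ c : C, LinearMap.lTensor D ΔC (ρ c) =
      (TensorProduct.assoc K D C C) (LinearMap.rTensor C ρ (ΔC c)) +
      (TensorProduct.assoc K D C C) (LinearMap.rTensor C lam (ρ c))) (c : C) :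
    dcSh C D C (D ⊗[K] C) (LinearMap.rTensor _ (dcP ΔC ρ) (dcP ΔC ρ c)) +
      LinearMap.lTensor C (dcSh D C D C ∘ₗ LinearMap.rTensor C (dcQ ΔD lam)) (dcP ΔC ρ c) =
    LinearMap.lTensor C (LinearMap.lTensor D (dcP ΔC ρ)) (dcP ΔC ρ c) := by
  have e1 : LinearMap.lTensor D (dcP ΔC ρ) ∘ₗ ρ =
      (TensorProduct.assoc K D C (D ⊗[K] C)).toLinearMap ∘ₗ TensorProduct.map ρ ρ ∘ₗ ΔC +
      (dcSh D C D C ∘ₗ LinearMap.rTensor C (dcQ ΔD lam)) ∘ₗ ρ := by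
    ext c
    have h1 : LinearMap.lTensor D (dcP ΔC ρ) (ρ c) =
        LinearMap.lTensor D (LinearMap.lTensor C ρ) (LinearMap.lTensor D ΔC (ρ c)) := by
      simp [dcP, LinearMap.lTensor_comp]
    have h2 : ∀ t : C ⊗[K] C, LinearMap.lTensor D (LinearMap.lTensor C ρ)
        ((TensorProduct.assoc K D C C) (LinearMap.rTensor C ρ t)) =
        TensorProduct.assoc K D C (D ⊗[K] C) (TensorProduct.map ρ ρ t) := by
      intro t
      induction t using TensorProduct.induction_on with
      | zero => simp
      | add x y hx hy => simp only [map_add, hx, hy]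
      | tmul x y =>
        simp only [LinearMap.rTensor_tmul, TensorProduct.map_tmul]
        generalize ρ x = u
        induction u using TensorProduct.induction_on with
        | zero => simp
        | add x y hx hy => simp only [map_add, add_tmul, hx, hy]
        | tmul x y => simp
    have h3 : ∀ t : D ⊗[K] C, LinearMap.lTensor D (LinearMap.lTensor C ρ)
        ((TensorProduct.assoc K D C C) (LinearMap.rTensor C lam t)) =
        TensorProduct.assoc K D C (D ⊗[K] C) (LinearMap.rTensor _ lam (LinearMap.lTensor D ρ t)) := by
      intro t
      induction t using TensorProduct.induction_on with
      | zero => simp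
      | add x y hx hy => simp only [map_add, hx, hy]
      | tmul x y =>
        simp only [LinearMap.rTensor_tmul, LinearMap.lTensor_tmul]
        generalize lam x = u
        induction u using TensorProduct.induction_on with
        | zero => simp
        | add x y hx hy => simp only [map_add, add_tmul, hx, hy]
        | tmul x y => simp
    have h4 : ∀ t : D ⊗[K] C, TensorProduct.assoc K D C (D ⊗[K] C) (LinearMap.rTensor _ lam
        ((TensorProduct.assoc K D D C) (LinearMap.rTensor C ΔD t))) =
        dcSh D C D C (LinearMap.rTensor C (dcQ ΔD lam) t) := by
      intro t
      induction t using TensorProduct.induction_on with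
      | zero => simp
      | add x y hx hy => simp only [map_add, hx, hy]
      | tmul x y =>
        simp only [LinearMap.rTensor_tmul, dcQ, LinearMap.comp_apply]
        generalize ΔD x = u
        induction u using TensorProduct.induction_on with
        | zero => simp
        | add x y hx hy => simp only [map_add, add_tmul, hx, hy]
        | tmul x z =>
          simp only [LinearMap.rTensor_tmul, TensorProduct.assoc_tmul]
          generalize lam x = u
          induction u using TensorProduct.induction_on with
          | zero => simp
          | add x y hx hy => simp only [map_add, add_tmul, hx, hy]
          | tmul x y => simp [dcSh_tmul]
    simp only [LinearMap.comp_apply, LinearMap.add_apply, LinearEquiv.coe_coe]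
    rw [h1, compat1, map_add, h2, h3, ← hρ, h4]
  have e2 : LinearMap.lTensor C (LinearMap.lTensor D (dcP ΔC ρ)) (dcP ΔC ρ c) =
      LinearMap.lTensor C (LinearMap.lTensor D (dcP ΔC ρ) ∘ₗ ρ) (ΔC c) := by
    simp [dcP, LinearMap.lTensor_comp]
  have e3 : ∀ t : C ⊗[K] C, LinearMap.lTensor C ((TensorProduct.assoc K D C (D ⊗[K] C)).toLinearMap
        ∘ₗ TensorProduct.map ρ ρ ∘ₗ ΔC) t =
      LinearMap.lTensor C ((TensorProduct.assoc K D C (D ⊗[K] C)).toLinearMap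
        ∘ₗ TensorProduct.map ρ ρ) (TensorProduct.map LinearMap.id ΔC t) := by
    intro t
    induction t using TensorProduct.induction_on with
    | zero => simp
    | add x y hx hy => simp only [map_add, hx, hy]
    | tmul x y => simp
  have e4 : ∀ t : C ⊗[K] C, LinearMap.lTensor C ((TensorProduct.assoc K D C (D ⊗[K] C)).toLinearMap
        ∘ₗ TensorProduct.map ρ ρ) (TensorProduct.assoc K C C C (TensorProduct.map ΔC LinearMap.id t)) =
      dcSh C D C (D ⊗[K] C) (LinearMap.rTensor _ (dcP ΔC ρ) (LinearMap.lTensor C ρ t)) := by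
    intro t
    induction t using TensorProduct.induction_on with
    | zero => simp
    | add x y hx hy => simp only [map_add, hx, hy]
    | tmul x y =>
      simp only [TensorProduct.map_tmul, LinearMap.rTensor_tmul, LinearMap.lTensor_tmul, dcP,
        LinearMap.comp_apply]
      generalize ΔC x = u
      induction u using TensorProduct.induction_on with
      | zero => simp
      | add x y hx hy => simp only [map_add, add_tmul, hx, hy]
      | tmul x z => simp [dcSh]
  rw [e2, e1, LinearMap.lTensor_add, LinearMap.add_apply, e3, ← hC c, e4]
  simp only [dcP, LinearMap.lTensor_comp, LinearMap.comp_apply]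

theorem dc_keyD (ΔC : C →ₗ[K] C ⊗[K] C)
    (ΔD : D →ₗ[K] D ⊗[K] D) (hD : Coassoc ΔD)
    (ρ : C →ₗ[K] D ⊗[K] C)
    (lam : D →ₗ[K] D ⊗[K] C)
    (hlam : ∀ d : D, (TensorProduct.assoc K D C C) (LinearMap.rTensor C lam (lam d)) =
      LinearMap.lTensor D ΔC (lam d))
    (compat2 : ∀ d : D, (TensorProduct.assoc K D D C) (LinearMap.rTensor C ΔD (lam d)) =
      LinearMap.lTensor D lam (ΔD d) + LinearMap.lTensor D ρ (lam d)) (d : D) :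
    dcSh D C D (C ⊗[K] D) (LinearMap.rTensor _ (dcQ ΔD lam) (dcQ ΔD lam d)) =
      LinearMap.lTensor D (dcSh C D C D ∘ₗ LinearMap.rTensor D (dcP ΔC ρ)) (dcQ ΔD lam d) +
    LinearMap.lTensor D (LinearMap.lTensor C (dcQ ΔD lam)) (dcQ ΔD lam d) := by
  -- the middle object: `D → D ⊗ (C ⊗ (D ⊗ C))`
  have e1 : ∀ x : D, dcSh D C D C (LinearMap.rTensor C (dcQ ΔD lam) (lam x)) =
      TensorProduct.assoc K D C (D ⊗[K] C) (TensorProduct.map lam lam (ΔD x)) +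
      LinearMap.lTensor D (dcP ΔC ρ) (lam x) := by
    intro x
    have h4 : ∀ t : D ⊗[K] C,
        dcSh D C D C (LinearMap.rTensor C (dcQ ΔD lam) t) =
        TensorProduct.assoc K D C (D ⊗[K] C) (LinearMap.rTensor _ lam
        ((TensorProduct.assoc K D D C) (LinearMap.rTensor C ΔD t))) := by
      intro t
      induction t using TensorProduct.induction_on with
      | zero => simp
      | add x y hx hy => simp only [map_add, hx, hy]
      | tmul x y =>
        simp only [LinearMap.rTensor_tmul, dcQ, LinearMap.comp_apply]
        generalize ΔD x = u
        induction u using TensorProduct.induction_on with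
        | zero => simp
        | add x y hx hy => simp only [map_add, add_tmul, hx, hy]
        | tmul x z =>
          simp only [LinearMap.rTensor_tmul, TensorProduct.assoc_tmul]
          generalize lam x = u
          induction u using TensorProduct.induction_on with
          | zero => simp
          | add x y hx hy => simp only [map_add, add_tmul, hx, hy]
          | tmul x y => simp [dcSh_tmul]
    have h2 : ∀ t : D ⊗[K] D, LinearMap.rTensor _ lam (LinearMap.lTensor D lam t) =
        TensorProduct.map lam lam t := by
      intro t
      induction t using TensorProduct.induction_on with
      | zero => simp
      | add x y hx hy => simp only [map_add, hx, hy]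
      | tmul x y => simp
    have h3 : ∀ t : D ⊗[K] C, TensorProduct.assoc K D C (D ⊗[K] C)
        (LinearMap.rTensor _ lam (LinearMap.lTensor D ρ t)) =
        LinearMap.lTensor D (LinearMap.lTensor C ρ)
        ((TensorProduct.assoc K D C C) (LinearMap.rTensor C lam t)) := by
      intro t
      induction t using TensorProduct.induction_on with
      | zero => simp
      | add x y hx hy => simp only [map_add, hx, hy]
      | tmul x y =>
        simp only [LinearMap.rTensor_tmul, LinearMap.lTensor_tmul]
        generalize lam x = u
        induction u using TensorProduct.induction_on with
        | zero => simp
        | add x y hx hy => simp only [map_add, add_tmul, hx, hy]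
        | tmul x y => simp
    rw [h4, compat2, map_add, map_add, h2, h3, hlam]
    simp [dcP, LinearMap.lTensor_comp]
  have e2 : ∀ t : D ⊗[K] D, dcSh D C D (C ⊗[K] D) (LinearMap.rTensor _ (dcQ ΔD lam)
      (TensorProduct.assoc K D C D (LinearMap.rTensor D lam t))) =
      LinearMap.lTensor D (dcSh C D C D) (TensorProduct.assoc K D (C ⊗[K] (D ⊗[K] C)) D
        (LinearMap.rTensor D (dcSh D C D C ∘ₗ LinearMap.rTensor C (dcQ ΔD lam) ∘ₗ lam) t)) := by
    intro t
    induction t using TensorProduct.induction_on with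
    | zero => simp
    | add x y hx hy => simp only [map_add, hx, hy]
    | tmul x z =>
      simp only [LinearMap.rTensor_tmul, LinearMap.comp_apply]
      generalize lam x = u
      induction u using TensorProduct.induction_on with
      | zero => simp
      | add x y hx hy => simp only [map_add, add_tmul, hx, hy]
      | tmul x y =>
        simp only [LinearMap.rTensor_tmul, TensorProduct.assoc_tmul]
        generalize dcQ ΔD lam x = u
        induction u using TensorProduct.induction_on with
        | zero => simp
        | add x y hx hy => simp only [map_add, add_tmul, hx, hy]
        | tmul x u =>
          induction u using TensorProduct.induction_on with
          | zero => simp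
          | add x y hx hy => simp only [map_add, add_tmul, tmul_add, hx, hy]
          | tmul x u => simp [dcSh_tmul]
  have e3 : dcSh D C D C ∘ₗ LinearMap.rTensor C (dcQ ΔD lam) ∘ₗ lam =
      (TensorProduct.assoc K D C (D ⊗[K] C)).toLinearMap ∘ₗ TensorProduct.map lam lam ∘ₗ ΔD +
      LinearMap.lTensor D (dcP ΔC ρ) ∘ₗ lam := by
    ext x
    exact e1 x
  have e4 : ∀ t : D ⊗[K] D, LinearMap.lTensor D (dcSh C D C D)
      (TensorProduct.assoc K D (C ⊗[K] (D ⊗[K] C)) D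
        (LinearMap.rTensor D (LinearMap.lTensor D (dcP ΔC ρ) ∘ₗ lam) t)) =
      LinearMap.lTensor D (dcSh C D C D ∘ₗ LinearMap.rTensor D (dcP ΔC ρ))
        (TensorProduct.assoc K D C D (LinearMap.rTensor D lam t)) := by
    intro t
    induction t using TensorProduct.induction_on with
    | zero => simp
    | add x y hx hy => simp only [map_add, hx, hy]
    | tmul x z =>
      simp only [LinearMap.rTensor_tmul, LinearMap.comp_apply]
      generalize lam x = u
      induction u using TensorProduct.induction_on with
      | zero => simp
      | add x y hx hy => simp only [map_add, add_tmul, hx, hy]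
      | tmul x y => simp
  let Φ : D ⊗[K] (D ⊗[K] D) →ₗ[K] D ⊗[K] (C ⊗[K] (D ⊗[K] (C ⊗[K] D))) :=
    (TensorProduct.assoc K D C _).toLinearMap ∘ₗ
      TensorProduct.map lam ((TensorProduct.assoc K D C D).toLinearMap ∘ₗ LinearMap.rTensor D lam)
  have e5 : ∀ t : D ⊗[K] D, LinearMap.lTensor D (dcSh C D C D)
      (TensorProduct.assoc K D (C ⊗[K] (D ⊗[K] C)) D
        (LinearMap.rTensor D ((TensorProduct.assoc K D C (D ⊗[K] C)).toLinearMap ∘ₗ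
          TensorProduct.map lam lam ∘ₗ ΔD) t)) =
      Φ (TensorProduct.assoc K D D D (TensorProduct.map ΔD LinearMap.id t)) := by
    intro t
    induction t using TensorProduct.induction_on with
    | zero => simp
    | add x y hx hy => simp only [map_add, hx, hy]
    | tmul x z =>
      simp only [LinearMap.rTensor_tmul, LinearMap.comp_apply, TensorProduct.map_tmul]
      generalize ΔD x = u
      induction u using TensorProduct.induction_on with
      | zero => simp
      | add x y hx hy => simp only [map_add, add_tmul, hx, hy]
      | tmul x y =>
        simp only [Φ, LinearMap.comp_apply, TensorProduct.map_tmul, TensorProduct.assoc_tmul,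
          LinearEquiv.coe_coe, LinearMap.rTensor_tmul, LinearMap.id_apply]
        generalize lam x = u
        generalize lam y = v
        induction u using TensorProduct.induction_on with
        | zero => simp
        | add x y hx hy => simp only [map_add, add_tmul, hx, hy]
        | tmul x y =>
          induction v using TensorProduct.induction_on with
          | zero => simp
          | add x y hx hy => simp only [map_add, add_tmul, tmul_add, hx, hy]
          | tmul x y => simp [dcSh_tmul]
  have e6 : ∀ t : D ⊗[K] D, Φ (TensorProduct.map LinearMap.id ΔD t) =
      LinearMap.lTensor D (LinearMap.lTensor C (dcQ ΔD lam))
        (TensorProduct.assoc K D C D (LinearMap.rTensor D lam t)) := by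
    intro t
    induction t using TensorProduct.induction_on with
    | zero => simp
    | add x y hx hy => simp only [map_add, hx, hy]
    | tmul x z =>
      simp only [Φ, LinearMap.comp_apply, TensorProduct.map_tmul,
        LinearEquiv.coe_coe, LinearMap.rTensor_tmul, LinearMap.id_apply]
      generalize lam x = u
      induction u using TensorProduct.induction_on with
      | zero => simp
      | add x y hx hy => simp only [map_add, add_tmul, hx, hy]
      | tmul x y => simp [dcQ]
  have hQ : dcQ ΔD lam d = TensorProduct.assoc K D C D (LinearMap.rTensor D lam (ΔD d)) := rfl
  rw [hQ, e2, e3, LinearMap.rTensor_add, LinearMap.add_apply, map_add, map_add, e4, e5, hD d, e6,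
    add_comm]

/-- `(x ⊗ (e ⊗ f)) ⊗ d ↦ (x ⊗ e) ⊗ (f ⊗ d)`. -/
def dcJ1 (R S T U : Type*) [AddCommGroup R] [Module K R] [AddCommGroup S] [Module K S]
    [AddCommGroup T] [Module K T] [AddCommGroup U] [Module K U] :
    (R ⊗[K] (S ⊗[K] T)) ⊗[K] U →ₗ[K] (R ⊗[K] S) ⊗[K] (T ⊗[K] U) :=
  (TensorProduct.assoc K R S (T ⊗[K] U)).symm.toLinearMap ∘ₗ dcSh R S T U

/-- `x ⊗ (e ⊗ (f ⊗ (g ⊗ (h ⊗ d)))) ↦ (x ⊗ e) ⊗ ((f ⊗ g) ⊗ (h ⊗ d))`. -/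
def dcN (C D : Type*) [AddCommGroup C] [Module K C] [AddCommGroup D] [Module K D] :
    C ⊗[K] (D ⊗[K] (C ⊗[K] (D ⊗[K] (C ⊗[K] D)))) →ₗ[K]
      (C ⊗[K] D) ⊗[K] ((C ⊗[K] D) ⊗[K] (C ⊗[K] D)) :=
  LinearMap.lTensor _ (TensorProduct.assoc K C D (C ⊗[K] D)).symm.toLinearMap ∘ₗ
  (TensorProduct.assoc K C D _).symm.toLinearMap

theorem dcN_tmul {D : Type*} [AddCommGroup D] [Module K D] (x f h : C) (e g d : D) :
    dcN (K := K) C D (x ⊗ₜ (e ⊗ₜ (f ⊗ₜ (g ⊗ₜ (h ⊗ₜ d))))) =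
      (x ⊗ₜ e) ⊗ₜ ((f ⊗ₜ g) ⊗ₜ (h ⊗ₜ d)) := by
  simp [dcN]

/-- `x ⊗ (e ⊗ (f ⊗ (g ⊗ h))) ⊗ d` right-normalized. -/
def dcS (C D : Type*) [AddCommGroup C] [Module K C] [AddCommGroup D] [Module K D] :
    (C ⊗[K] (D ⊗[K] (C ⊗[K] (D ⊗[K] C)))) ⊗[K] D →ₗ[K]
      C ⊗[K] (D ⊗[K] (C ⊗[K] (D ⊗[K] (C ⊗[K] D)))) :=
  LinearMap.lTensor C (LinearMap.lTensor D (dcSh C D C D)) ∘ₗ dcSh C D _ D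

theorem dcS_tmul {D : Type*} [AddCommGroup D] [Module K D] (x f h : C) (e g d : D) :
    dcS (K := K) C D ((x ⊗ₜ (e ⊗ₜ (f ⊗ₜ (g ⊗ₜ h)))) ⊗ₜ d) =
      x ⊗ₜ (e ⊗ₜ (f ⊗ₜ (g ⊗ₜ (h ⊗ₜ d)))) := by
  simp [dcS, dcSh_tmul]

theorem dc_ind3 {R S T : Type*} [AddCommGroup R] [Module K R] [AddCommGroup S] [Module K S]
    [AddCommGroup T] [Module K T] {p : R ⊗[K] (S ⊗[K] T) → Prop} (h0 : p 0)
    (ha : ∀ x y, p x → p y → p (x + y)) (ht : ∀ r s t, p (r ⊗ₜ (s ⊗ₜ t))) (v) : p v := by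
  induction v using TensorProduct.induction_on with
  | zero => exact h0
  | add x y hx hy => exact ha _ _ hx hy
  | tmul r u =>
    induction u using TensorProduct.induction_on with
    | zero => simpa using h0
    | add x y hx hy => rw [tmul_add]; exact ha _ _ hx hy
    | tmul s t => exact ht r s t

theorem dc_main
    (P : C →ₗ[K] C ⊗[K] (D ⊗[K] C)) (Q : D →ₗ[K] D ⊗[K] (C ⊗[K] D))
    (hP : ∀ c, dcSh C D C (D ⊗[K] C) (LinearMap.rTensor _ P (P c)) +
      LinearMap.lTensor C (dcSh D C D C ∘ₗ LinearMap.rTensor C Q) (P c) =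
      LinearMap.lTensor C (LinearMap.lTensor D P) (P c))
    (hQ : ∀ d, dcSh D C D (C ⊗[K] D) (LinearMap.rTensor _ Q (Q d)) =
      LinearMap.lTensor D (dcSh C D C D ∘ₗ LinearMap.rTensor D P) (Q d) +
      LinearMap.lTensor D (LinearMap.lTensor C Q) (Q d))
    (E : C ⊗[K] D →ₗ[K] (C ⊗[K] D) ⊗[K] (C ⊗[K] D))
    (hE : ∀ c d, E (c ⊗ₜ d) = dcJ1 C D C D (P c ⊗ₜ d) +
      (TensorProduct.assoc K C D (C ⊗[K] D)).symm (c ⊗ₜ Q d)) :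
    Coassoc E := by
  -- the four bridges
  have b1 : ∀ (v : C ⊗[K] (D ⊗[K] C)) (d : D),
      TensorProduct.assoc K _ _ _ (TensorProduct.map E LinearMap.id (dcJ1 C D C D (v ⊗ₜ d))) =
      dcN C D (dcS C D (dcSh C D C (D ⊗[K] C) (LinearMap.rTensor _ P v) ⊗ₜ d)) +
      dcN C D (dcS C D (LinearMap.lTensor C (dcSh D C D C ∘ₗ LinearMap.rTensor C Q) v ⊗ₜ d)) := by
    intro v d
    induction v using dc_ind3 with
    | h0 => simp
    | ha x y hx hy => simp only [map_add, add_tmul, hx, hy]; abel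
    | ht x e f =>
      simp only [dcJ1, LinearMap.comp_apply, dcSh_tmul, LinearEquiv.coe_coe,
        TensorProduct.assoc_symm_tmul, TensorProduct.map_tmul, hE, LinearMap.rTensor_tmul,
        LinearMap.lTensor_tmul, LinearMap.id_apply, add_tmul, map_add]
      congr 1
      · generalize P x = u
        induction u using dc_ind3 with
        | h0 => simp
        | ha x y hx hy => simp only [map_add, add_tmul, hx, hy]
        | ht x e f => simp [dcSh_tmul, dcS_tmul, dcN_tmul]
      · generalize Q e = u
        induction u using dc_ind3 with
        | h0 => simp
        | ha x y hx hy => simp only [map_add, add_tmul, tmul_add, hx, hy]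
        | ht x e f => simp [dcSh_tmul, dcS_tmul, dcN_tmul]
  have b2 : ∀ (c : C) (w : D ⊗[K] (C ⊗[K] D)),
      TensorProduct.assoc K _ _ _ (TensorProduct.map E LinearMap.id
        ((TensorProduct.assoc K C D (C ⊗[K] D)).symm (c ⊗ₜ w))) =
      dcN C D (dcSh C D C _ (P c ⊗ₜ w)) +
      dcN C D (c ⊗ₜ dcSh D C D (C ⊗[K] D) (LinearMap.rTensor _ Q w)) := by
    intro c w
    induction w using dc_ind3 with
    | h0 => simp
    | ha x y hx hy => simp only [map_add, tmul_add, hx, hy]; abel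
    | ht e f g =>
      simp only [TensorProduct.assoc_symm_tmul, TensorProduct.map_tmul, hE, LinearMap.rTensor_tmul,
        LinearMap.id_apply, add_tmul, map_add]
      congr 1
      · generalize P c = u
        induction u using dc_ind3 with
        | h0 => simp
        | ha x y hx hy => simp only [map_add, add_tmul, hx, hy]
        | ht x e f => simp [dcSh_tmul, dcJ1, dcN_tmul]
      · generalize Q e = u
        induction u using dc_ind3 with
        | h0 => simp
        | ha x y hx hy => simp only [map_add, add_tmul, tmul_add, hx, hy]
        | ht x e f => simp [dcSh_tmul, dcN_tmul]
  have b3 : ∀ (v : C ⊗[K] (D ⊗[K] C)) (d : D),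
      TensorProduct.map LinearMap.id E (dcJ1 C D C D (v ⊗ₜ d)) =
      dcN C D (dcS C D (LinearMap.lTensor C (LinearMap.lTensor D P) v ⊗ₜ d)) +
      dcN C D (dcSh C D C _ (v ⊗ₜ Q d)) := by
    intro v d
    induction v using dc_ind3 with
    | h0 => simp
    | ha x y hx hy => simp only [map_add, add_tmul, hx, hy]; abel
    | ht x e f =>
      simp only [dcJ1, LinearMap.comp_apply, dcSh_tmul, LinearEquiv.coe_coe,
        TensorProduct.assoc_symm_tmul, TensorProduct.map_tmul, hE,
        LinearMap.lTensor_tmul, LinearMap.id_apply, tmul_add]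
      congr 1
  have b4 : ∀ (c : C) (w : D ⊗[K] (C ⊗[K] D)),
      TensorProduct.map LinearMap.id E
        ((TensorProduct.assoc K C D (C ⊗[K] D)).symm (c ⊗ₜ w)) =
      dcN C D (c ⊗ₜ LinearMap.lTensor D (dcSh C D C D ∘ₗ LinearMap.rTensor D P) w) +
      dcN C D (c ⊗ₜ LinearMap.lTensor D (LinearMap.lTensor C Q) w) := by
    intro c w
    induction w using dc_ind3 with
    | h0 => simp
    | ha x y hx hy => simp only [map_add, tmul_add, hx, hy]; abel
    | ht e f g =>
      simp [hE, dcN, dcJ1, tmul_add]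
  intro z
  induction z using TensorProduct.induction_on with
  | zero => simp
  | add x y hx hy => simp only [map_add, hx, hy]
  | tmul c d =>
    simp only [hE, map_add]
    rw [b1, b2, b3, b4, ← hP, hQ]
    simp only [add_tmul, tmul_add, map_add]
    abel

end aux

/-- Theorem 5.15: a double coalgebra `(C, D)` yields a
coassociative comultiplication on `C ⊗ D`. -/
theorem double_coalgebra_tensor_coassociative
    {D : Type*} [AddCommGroup D] [Module K D]
    (ΔC : C →ₗ[K] C ⊗[K] C) (hC : Coassoc ΔC)
    (ΔD : D →ₗ[K] D ⊗[K] D) (hD : Coassoc ΔD)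
    (ρ : C →ₗ[K] D ⊗[K] C)
    (hρ : ∀ c : C, (TensorProduct.assoc K D D C) (LinearMap.rTensor C ΔD (ρ c)) =
      LinearMap.lTensor D ρ (ρ c))
    (lam : D →ₗ[K] D ⊗[K] C)
    (hlam : ∀ d : D, (TensorProduct.assoc K D C C) (LinearMap.rTensor C lam (lam d)) =
      LinearMap.lTensor D ΔC (lam d))
    (compat1 : ∀ c : C, LinearMap.lTensor D ΔC (ρ c) =
      (TensorProduct.assoc K D C C) (LinearMap.rTensor C ρ (ΔC c)) +
      (TensorProduct.assoc K D C C) (LinearMap.rTensor C lam (ρ c)))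
    (compat2 : ∀ d : D, (TensorProduct.assoc K D D C) (LinearMap.rTensor C ΔD (lam d)) =
      LinearMap.lTensor D lam (ΔD d) + LinearMap.lTensor D ρ (lam d))
    (E : C ⊗[K] D →ₗ[K] (C ⊗[K] D) ⊗[K] (C ⊗[K] D))
    (hE : E =
      ((TensorProduct.assoc K (C ⊗[K] D) C D).toLinearMap ∘ₗ
        LinearMap.rTensor D (TensorProduct.assoc K C D C).symm.toLinearMap ∘ₗ
        LinearMap.rTensor D (LinearMap.lTensor C ρ) ∘ₗ
        LinearMap.rTensor D ΔC) +
      ((TensorProduct.assoc K C D (C ⊗[K] D)).symm.toLinearMap ∘ₗ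
        LinearMap.lTensor C (TensorProduct.assoc K D C D).toLinearMap ∘ₗ
        LinearMap.lTensor C (LinearMap.rTensor D lam) ∘ₗ
        LinearMap.lTensor C ΔD)) :
    Coassoc E := by
  refine dc_main (dcP ΔC ρ) (dcQ ΔD lam) (dc_keyC ΔC hC ΔD ρ hρ lam compat1)
    (dc_keyD ΔC ΔD hD ρ lam hlam compat2) E ?_
  intro c d
  rw [hE]
  simp only [LinearMap.add_apply, LinearMap.comp_apply, LinearMap.rTensor_tmul,
    LinearMap.lTensor_tmul, LinearEquiv.coe_coe]
  congr 1
  change _ = dcJ1 C D C D ((LinearMap.lTensor C ρ (ΔC c)) ⊗ₜ d)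
  generalize LinearMap.lTensor C ρ (ΔC c) = u
  induction u using dc_ind3 with
  | h0 => simp
  | ha x y hx hy => simp only [map_add, add_tmul, hx, hy]
  | ht x e f => simp [dcJ1, dcSh_tmul]


end
end

section
/- Let (C, Q, T) be a Rota-Baxter cosystem over a field K. Define Δ_≻, Δ_≺ : C → C⊗C by Δ_≻(c) = c₁ ⊗ T(c₂) and Δ_≺(c) = Q(c₁) ⊗ c₂. Then (C, Δ_≻, Δ_≺) is a dendriform coalgebra, i.e. for all c ∈ C: (Δ_≻⊗id)Δ_≻(c) = (id⊗Δ_≻ + id⊗Δ_≺)Δ_≻(c), (Δ_≺⊗id)Δ_≻(c) = (id⊗Δ_≻)Δ_≺(c), and (Δ_≻⊗id + Δ_≺⊗id)Δ_≺(c) = (id⊗Δ_≺)Δ_≺(c). -/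
open TensorProduct

noncomputable section

variable {K : Type*} [Field K] {C : Type*} [AddCommGroup C] [Module K C]

theorem aux_left (Δ : C →ₗ[K] C ⊗[K] C) (f g k : C →ₗ[K] C) (x : C ⊗[K] C) :
    (TensorProduct.assoc K C C C) (TensorProduct.map (TensorProduct.map f g ∘ₗ Δ) k x) =
    TensorProduct.map f (TensorProduct.map g k)
      ((TensorProduct.assoc K C C C) (TensorProduct.map Δ LinearMap.id x)) := by
  induction x with
  | zero => simp
  | add x y hx hy => simp only [map_add, hx, hy]
  | tmul a b =>
    simp only [TensorProduct.map_tmul, LinearMap.comp_apply, LinearMap.id_apply]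
    induction Δ a with
    | zero => simp
    | add x y hx hy => simp only [map_add, TensorProduct.add_tmul, hx, hy]
    | tmul a b => simp

theorem aux_right (Δ : C →ₗ[K] C ⊗[K] C) (f g k : C →ₗ[K] C) (x : C ⊗[K] C) :
    TensorProduct.map f (TensorProduct.map g k ∘ₗ Δ) x =
    TensorProduct.map f (TensorProduct.map g k) (TensorProduct.map LinearMap.id Δ x) := by
  induction x with
  | zero => simp
  | add x y hx hy => simp only [map_add, hx, hy]
  | tmul a b => simp

theorem aux_comp (u v : C →ₗ[K] C) {M N : Type*} [AddCommGroup M] [Module K M]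
    [AddCommGroup N] [Module K N] (f : C →ₗ[K] M) (g : C →ₗ[K] N) (x : C ⊗[K] C) :
    TensorProduct.map f g (TensorProduct.map u v x) =
    TensorProduct.map (f ∘ₗ u) (g ∘ₗ v) x := by
  rw [TensorProduct.map_comp]; rfl

/-- Theorem 6.2(1): a Rota-Baxter cosystem induces a dendriform
coalgebra via `Δ_≻(c) = c₁ ⊗ T(c₂)` and `Δ_≺(c) = Q(c₁) ⊗ c₂`. -/
theorem dendriform_of_cosystem
    (Δ : C →ₗ[K] C ⊗[K] C) (hΔ : Coassoc Δ) (Q T : C →ₗ[K] C)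
    (h : IsRBCosystem Δ Q T) :
    IsDendriformCoalgebra (TensorProduct.map LinearMap.id T ∘ₗ Δ)
      (TensorProduct.map Q LinearMap.id ∘ₗ Δ) := by
  obtain ⟨h1, h2⟩ := h
  have e1 : TensorProduct.map Q Q ∘ₗ Δ =
      (TensorProduct.map LinearMap.id T ∘ₗ Δ) ∘ₗ Q +
      (TensorProduct.map Q LinearMap.id ∘ₗ Δ) ∘ₗ Q := by
    ext c
    simpa [add_comm] using h1 c
  have e2 : TensorProduct.map T T ∘ₗ Δ =
      (TensorProduct.map LinearMap.id T ∘ₗ Δ) ∘ₗ T +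
      (TensorProduct.map Q LinearMap.id ∘ₗ Δ) ∘ₗ T := by
    ext c
    simpa [add_comm] using h2 c
  refine ⟨fun c => ?_, fun c => ?_, fun c => ?_⟩
  · have key : TensorProduct.map LinearMap.id (TensorProduct.map T T ∘ₗ Δ) (Δ c) = _ :=
      aux_right Δ LinearMap.id T T (Δ c)
    rw [← hΔ c, ← aux_left, e2, TensorProduct.map_add_right] at key
    simp only [LinearMap.comp_apply (g := Δ), LinearMap.comp_apply (f := Δ), aux_comp,
      LinearMap.id_comp, LinearMap.comp_id]
    exact key.symm
  · simp only [LinearMap.comp_apply (g := Δ), LinearMap.comp_apply (f := Δ), aux_comp,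
      LinearMap.id_comp, LinearMap.comp_id]
    rw [aux_left, aux_right, hΔ c]
  · have key := aux_left Δ Q Q LinearMap.id (Δ c)
    rw [hΔ c, ← aux_right, e1, TensorProduct.map_add_left, LinearMap.add_apply, map_add] at key
    simp only [LinearMap.comp_apply (g := Δ), LinearMap.comp_apply (f := Δ), aux_comp,
      LinearMap.id_comp, LinearMap.comp_id]
    exact key

end
end

section
/- Let C be a non-degenerate coalgebra over a field K and let Q, T : C → C be linear maps. Define Δ_≻, Δ_≺ : C → C⊗C by Δ_≻(c) = c₁ ⊗ T(c₂) and Δ_≺(c) = Q(c₁) ⊗ c₂. If (C, Δ_≻, Δ_≺) is a dendriform coalgebra, then (C, Q, T) is a Rota-Baxter cosystem. -/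
open TensorProduct

noncomputable section

variable {K : Type*} [Field K] {C : Type*} [AddCommGroup C] [Module K C]

theorem aux_nd_right (Δ : C →ₗ[K] C ⊗[K] C) (hnd : Nondegenerate Δ)
    (F : C →ₗ[K] C ⊗[K] C)
    (hF : ∀ c, TensorProduct.map LinearMap.id F (Δ c) = 0) (c : C) : F c = 0 := by
  by_contra hc
  have hc0 : c ≠ 0 := by
    rintro rfl
    exact hc (map_zero F)
  obtain ⟨φ, hφ⟩ : ∃ φ : C ⊗[K] C →ₗ[K] K, φ (F c) ≠ 0 := by
    by_contra hcon
    push Not at hcon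
    exact hc ((Module.forall_dual_apply_eq_zero_iff K _).1 hcon)
  have h0 := hnd ((LinearMap.toSpanSingleton K C c ∘ₗ φ) ∘ₗ F) (Or.inl fun d => by
    have := TensorProduct.map_comp (LinearMap.id : C →ₗ[K] C) (LinearMap.toSpanSingleton K C c ∘ₗ φ)
      (LinearMap.id : C →ₗ[K] C) F
    rw [LinearMap.id_comp] at this
    rw [this, LinearMap.comp_apply, hF, map_zero])
  have h1 := LinearMap.congr_fun h0 c
  simp [hφ, hc0] at h1

theorem aux_nd_left (Δ : C →ₗ[K] C ⊗[K] C) (hnd : Nondegenerate Δ)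
    (F : C →ₗ[K] C ⊗[K] C)
    (hF : ∀ c, TensorProduct.map F LinearMap.id (Δ c) = 0) (c : C) : F c = 0 := by
  by_contra hc
  have hc0 : c ≠ 0 := by
    rintro rfl
    exact hc (map_zero F)
  obtain ⟨φ, hφ⟩ : ∃ φ : C ⊗[K] C →ₗ[K] K, φ (F c) ≠ 0 := by
    by_contra hcon
    push Not at hcon
    exact hc ((Module.forall_dual_apply_eq_zero_iff K _).1 hcon)
  have h0 := hnd ((LinearMap.toSpanSingleton K C c ∘ₗ φ) ∘ₗ F) (Or.inr fun d => by
    have := TensorProduct.map_comp (LinearMap.toSpanSingleton K C c ∘ₗ φ) (LinearMap.id : C →ₗ[K] C)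
      F (LinearMap.id : C →ₗ[K] C)
    rw [LinearMap.id_comp] at this
    rw [this, LinearMap.comp_apply, hF, map_zero])
  have h1 := LinearMap.congr_fun h0 c
  simp [hφ, hc0] at h1

theorem aux_assoc (f g h : C →ₗ[K] C) (x : (C ⊗[K] C) ⊗[K] C) :
    TensorProduct.assoc K C C C (TensorProduct.map (TensorProduct.map f g) h x) =
      TensorProduct.map f (TensorProduct.map g h) (TensorProduct.assoc K C C C x) := by
  have : (TensorProduct.assoc K C C C).toLinearMap ∘ₗ
      (TensorProduct.map (TensorProduct.map f g) h) =
      TensorProduct.map f (TensorProduct.map g h) ∘ₗ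
        (TensorProduct.assoc K C C C).toLinearMap := by
    ext; simp
  exact LinearMap.congr_fun this x

theorem aux_mm {A B A' B' A'' B'' : Type*} [AddCommGroup A] [Module K A] [AddCommGroup B]
    [Module K B] [AddCommGroup A'] [Module K A'] [AddCommGroup B'] [Module K B']
    [AddCommGroup A''] [Module K A''] [AddCommGroup B''] [Module K B'']
    (f : A' →ₗ[K] A'') (g : B' →ₗ[K] B'') (f' : A →ₗ[K] A') (g' : B →ₗ[K] B')
    (x : A ⊗[K] B) :
    TensorProduct.map f g (TensorProduct.map f' g' x) =
      TensorProduct.map (f ∘ₗ f') (g ∘ₗ g') x := by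
  rw [TensorProduct.map_comp, LinearMap.comp_apply]

/-- Theorem 6.2(2): on a non-degenerate coalgebra, the dendriform
coalgebra conditions for `Δ_≻(c) = c₁ ⊗ T(c₂)`, `Δ_≺(c) = Q(c₁) ⊗ c₂` imply that
`(C, Q, T)` is a Rota-Baxter cosystem. -/
theorem cosystem_of_dendriform
    (Δ : C →ₗ[K] C ⊗[K] C) (hΔ : Coassoc Δ) (hnd : Nondegenerate Δ)
    (Q T : C →ₗ[K] C)
    (h : IsDendriformCoalgebra (TensorProduct.map LinearMap.id T ∘ₗ Δ)
      (TensorProduct.map Q LinearMap.id ∘ₗ Δ)) :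
    IsRBCosystem Δ Q T := by
  obtain ⟨h1, -, h3⟩ := h
  constructor
  · intro c
    have key := aux_nd_left Δ hnd
      (TensorProduct.map Q Q ∘ₗ Δ - ((TensorProduct.map Q LinearMap.id ∘ₗ Δ) ∘ₗ Q +
        (TensorProduct.map LinearMap.id T ∘ₗ Δ) ∘ₗ Q)) (fun d => by
      apply (TensorProduct.assoc K C C C).injective
      have e := h3 d
      have e2 : TensorProduct.map LinearMap.id (TensorProduct.map Q LinearMap.id ∘ₗ Δ)
          (TensorProduct.map Q LinearMap.id (Δ d)) =
          TensorProduct.assoc K C C C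
            (TensorProduct.map (TensorProduct.map Q Q ∘ₗ Δ) LinearMap.id (Δ d)) := by
        have a1 := aux_mm (TensorProduct.map Q Q) (LinearMap.id : C →ₗ[K] C) Δ LinearMap.id (Δ d)
        have a2 := aux_mm Q (TensorProduct.map Q (LinearMap.id : C →ₗ[K] C)) LinearMap.id Δ (Δ d)
        rw [LinearMap.id_comp] at a1
        rw [LinearMap.comp_id] at a2
        rw [← a1, aux_assoc, hΔ d, a2, aux_mm, LinearMap.id_comp, LinearMap.comp_id]
      rw [LinearMap.comp_apply, e2, aux_mm, aux_mm, LinearMap.id_comp] at e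
      change TensorProduct.assoc K C C C (LinearMap.rTensor C _ _) = _
      rw [LinearMap.rTensor_sub, LinearMap.rTensor_add, LinearMap.sub_apply,
        LinearMap.add_apply]
      simp only [LinearMap.rTensor]
      rw [map_sub, map_add, map_zero, ← e]
      abel) c
    simpa [sub_eq_zero] using key
  · intro c
    have key := aux_nd_right Δ hnd
      (TensorProduct.map T T ∘ₗ Δ - ((TensorProduct.map Q LinearMap.id ∘ₗ Δ) ∘ₗ T +
        (TensorProduct.map LinearMap.id T ∘ₗ Δ) ∘ₗ T)) (fun d => by
      have e := h1 d
      have e2 : TensorProduct.assoc K C C C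
          (TensorProduct.map (TensorProduct.map LinearMap.id T ∘ₗ Δ) LinearMap.id
          (TensorProduct.map LinearMap.id T (Δ d))) =
            (TensorProduct.map LinearMap.id (TensorProduct.map T T ∘ₗ Δ) (Δ d)) := by
        have a1 := aux_mm (TensorProduct.map (LinearMap.id : C →ₗ[K] C) T) T Δ LinearMap.id (Δ d)
        rw [LinearMap.comp_id] at a1
        rw [aux_mm, LinearMap.id_comp, LinearMap.comp_id, ← a1, aux_assoc, hΔ d, aux_mm,
          LinearMap.id_comp]
      rw [LinearMap.comp_apply, e2, aux_mm, aux_mm, LinearMap.id_comp] at e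
      change LinearMap.lTensor C _ _ = _
      rw [LinearMap.lTensor_sub, LinearMap.lTensor_add, LinearMap.sub_apply,
        LinearMap.add_apply]
      simp only [LinearMap.lTensor]
      rw [e]
      abel) c
    simpa [sub_eq_zero] using key

end
end

section
/- Let (σ, τ) be a coassociative Yang-Baxter pair on a coalgebra C over a field K, with associated product cd = μ(c⊗d) = c₁σ(c₂, d) − τ(c, d₁)d₂ and coderivation δ_σ(c⊗d) = c₁σ(c₂, d) − σ(c, d₁)d₂. Let M be a right C-comodule with coaction ρ : M → M⊗C, ρ(m) = m₍₀₎ ⊗ m₍₁₎, and define the action m ⊳ c = m₍₀₎ σ(m₍₁₎, c). Then (i) the action is associative with respect to μ: m ⊳ (cd) = (m ⊳ c) ⊳ d for all m ∈ M, c, d ∈ C; and (ii) the action is a right covariant coderivation with respect to δ_σ: ρ(m ⊳ c) = (m ⊳ c₁) ⊗ c₂ + m₍₀₎ ⊗ δ_σ(m₍₁₎ ⊗ c) for all m ∈ M, c ∈ C. -/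
open TensorProduct

noncomputable section

variable {K : Type*} [Field K] {C : Type*} [AddCommGroup C] [Module K C]

theorem aux_contract {M : Type*} [AddCommGroup M] [Module K M] (σ : C →ₗ[K] C →ₗ[K] K)
    (t : M ⊗[K] C) (c : C) :
    (TensorProduct.rid K M) (LinearMap.lTensor M (TensorProduct.lift σ)
      ((TensorProduct.assoc K M C C) (t ⊗ₜ c))) =
    (TensorProduct.rid K M) (LinearMap.lTensor M (σ.flip c) t) := by
  induction t using TensorProduct.induction_on with
  | zero => simp
  | tmul m x => simp
  | add x y hx hy => simp only [TensorProduct.add_tmul, map_add, hx, hy]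

theorem aux_contractL (τ : C →ₗ[K] C →ₗ[K] K) (s : C ⊗[K] C) (c : C) :
    (TensorProduct.lid K C) (LinearMap.rTensor C (TensorProduct.lift τ)
      ((TensorProduct.assoc K C C C).symm (c ⊗ₜ s))) =
    (TensorProduct.lid K C) (LinearMap.rTensor C (τ c) s) := by
  induction s using TensorProduct.induction_on with
  | zero => simp
  | tmul m x => simp
  | add x y hx hy => simp only [TensorProduct.tmul_add, map_add, hx, hy]

theorem aux_mu (Δ : C →ₗ[K] C ⊗[K] C) (σ τ : C →ₗ[K] C →ₗ[K] K) (c d : C) :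
    muForm Δ σ τ (c ⊗ₜ d) =
      (TensorProduct.rid K C) (LinearMap.lTensor C (σ.flip d) (Δ c)) -
      (TensorProduct.lid K C) (LinearMap.rTensor C (τ c) (Δ d)) := by
  simp only [muForm, LinearMap.sub_apply, LinearMap.comp_apply, LinearEquiv.coe_coe,
    LinearMap.rTensor_tmul, LinearMap.lTensor_tmul, aux_contract, aux_contractL]

theorem aux_rho {M : Type*} [AddCommGroup M] [Module K M] (f : C →ₗ[K] K)
    (ρ : M →ₗ[K] M ⊗[K] C) (t : M ⊗[K] C) :
    ρ ((TensorProduct.rid K M) (LinearMap.lTensor M f t)) =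
    LinearMap.lTensor M ((TensorProduct.rid K C).toLinearMap ∘ₗ LinearMap.lTensor C f)
      ((TensorProduct.assoc K M C C) (LinearMap.rTensor C ρ t)) := by
  induction t using TensorProduct.induction_on with
  | zero => simp
  | tmul m x =>
    simp only [LinearMap.lTensor_tmul, LinearMap.rTensor_tmul, TensorProduct.rid_tmul, map_smul]
    induction ρ m using TensorProduct.induction_on with
    | zero => simp
    | tmul m x => simp
    | add x y hx hy => simp only [TensorProduct.add_tmul, map_add, hx, hy, smul_add]
  | add x y hx hy => simp only [map_add, hx, hy]

theorem aux_rr (f g : C →ₗ[K] K) (s : C ⊗[K] C) :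
    f ((TensorProduct.rid K C) (LinearMap.lTensor C g s)) = pairApply f g s := by
  induction s using TensorProduct.induction_on with
  | zero => simp
  | tmul m x => simp [pairApply, mul_comm]
  | add x y hx hy => simp only [map_add, hx, hy]

theorem aux_ll (f g : C →ₗ[K] K) (s : C ⊗[K] C) :
    f ((TensorProduct.lid K C) (LinearMap.rTensor C g s)) = pairApply g f s := by
  induction s using TensorProduct.induction_on with
  | zero => simp
  | tmul m x => simp [pairApply]
  | add x y hx hy => simp only [map_add, hx, hy]

/-- `auxL σ s x = σ(x, s₁) s₂`. -/
def auxL (σ : C →ₗ[K] C →ₗ[K] K) (s : C ⊗[K] C) : C →ₗ[K] C :=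
  (TensorProduct.lid K C).toLinearMap ∘ₗ (LinearMap.rTensorHom C ∘ₗ σ).flip s

theorem auxL_apply (σ : C →ₗ[K] C →ₗ[K] K) (s : C ⊗[K] C) (x : C) :
    auxL σ s x = (TensorProduct.lid K C) (LinearMap.rTensor C (σ x) s) := rfl

theorem aux_cov {M : Type*} [AddCommGroup M] [Module K M] (σ : C →ₗ[K] C →ₗ[K] K)
    (t : M ⊗[K] C) (s : C ⊗[K] C) (g : C →ₗ[K] M)
    (hg : ∀ a, g a = (TensorProduct.rid K M) (LinearMap.lTensor M (σ.flip a) t)) :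
    LinearMap.rTensor C g s = LinearMap.lTensor M (auxL σ s) t := by
  induction s using TensorProduct.induction_on with
  | zero =>
    have : auxL σ (0 : C ⊗[K] C) = 0 := by ext x; simp [auxL_apply]
    simp [this]
  | tmul a b =>
    rw [LinearMap.rTensor_tmul, hg]
    clear hg
    induction t using TensorProduct.induction_on with
    | zero => simp
    | tmul m x => simp [auxL_apply, TensorProduct.smul_tmul]
    | add x y hx hy => simp only [TensorProduct.add_tmul, map_add, hx, hy]
  | add x y hx hy =>
    have : auxL σ (x + y) = auxL σ x + auxL σ y := by ext z; simp [auxL_apply]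
    rw [map_add, hx, hy, this, LinearMap.lTensor_add, LinearMap.add_apply]

/-- Example 5.19: every right comodule over a coquasitriangular
covariant bialgebra is a right covariant module via `m ⊳ c = m₍₀₎ σ(m₍₁₎, c)`. -/
theorem right_comodule_is_covariant_module
    {M : Type*} [AddCommGroup M] [Module K M]
    (Δ : C →ₗ[K] C ⊗[K] C) (hΔ : Coassoc Δ)
    (σ τ : C →ₗ[K] C →ₗ[K] K) (h : IsCYBP Δ σ τ)
    (ρ : M →ₗ[K] M ⊗[K] C)
    (hρ : ∀ m : M, (TensorProduct.assoc K M C C) (LinearMap.rTensor C ρ (ρ m)) =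
      LinearMap.lTensor M Δ (ρ m))
    (act : M ⊗[K] C →ₗ[K] M)
    (hact : act = (TensorProduct.rid K M).toLinearMap ∘ₗ
      LinearMap.lTensor M (TensorProduct.lift σ) ∘ₗ
      (TensorProduct.assoc K M C C).toLinearMap ∘ₗ LinearMap.rTensor C ρ) :
    (∀ (m : M) (c d : C),
      act (m ⊗ₜ muForm Δ σ τ (c ⊗ₜ d)) = act (act (m ⊗ₜ c) ⊗ₜ d)) ∧
    (∀ (m : M) (c : C), ρ (act (m ⊗ₜ c)) =
        LinearMap.rTensor C (act ∘ₗ TensorProduct.mk K M C m) (Δ c) +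
        LinearMap.lTensor M (muForm Δ σ σ ∘ₗ (TensorProduct.mk K C C).flip c) (ρ m)) := by
  have ha : ∀ (m : M) (c : C), act (m ⊗ₜ c) =
      (TensorProduct.rid K M) (LinearMap.lTensor M (σ.flip c) (ρ m)) := by
    intro m c
    rw [hact]
    simp only [LinearMap.comp_apply, LinearEquiv.coe_coe, LinearMap.rTensor_tmul, aux_contract]
  have hr : ∀ (m : M) (c : C), ρ (act (m ⊗ₜ c)) =
      LinearMap.lTensor M (((TensorProduct.rid K C).toLinearMap ∘ₗ
        LinearMap.lTensor C (σ.flip c)) ∘ₗ Δ) (ρ m) := by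
    intro m c
    rw [ha, aux_rho, hρ, ← LinearMap.lTensor_comp_apply]
  refine ⟨fun m c d => ?_, fun m c => ?_⟩
  · rw [ha, ha (act (m ⊗ₜ c)) d, hr, ← LinearMap.lTensor_comp_apply]
    congr 3
    ext x
    have h1 := h.1 x c d
    simp only [LinearMap.comp_apply, LinearEquiv.coe_coe, LinearMap.flip_apply, aux_mu, map_sub,
      LinearMap.sub_apply, aux_rr, aux_ll]
    have h2 := aux_rr (σ.flip d) (σ.flip c) (Δ x)
    rw [LinearMap.flip_apply] at h2
    rw [h2]
    linear_combination -h1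
  · rw [hr, aux_cov σ (ρ m) (Δ c) _ (fun a => ha m a), ← LinearMap.add_apply,
      ← LinearMap.lTensor_add]
    congr 2
    ext x
    simp only [LinearMap.comp_apply, LinearMap.add_apply, LinearEquiv.coe_coe,
      LinearMap.flip_apply, TensorProduct.mk_apply, aux_mu, auxL_apply]
    abel

end
end
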